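/- Let U, U' ⊆ ℂ be open, g : U → U' a biholomorphism, and V, V' ⊆ ℂ open with G : V → V' a biholomorphism. Let f₂ : U → V and f₁ : U' → V' be smooth with nowhere-vanishing Wirtinger derivatives ∂f₂, ∂f₁, satisfying the intertwining relation f₁∘g = G∘f₂ on U. Set μ₁ = ∂̄f₁/∂f₁ on U' and μ₂ = ∂̄f₂/∂f₂ on U. Let h₁ : U' → ℂ be smooth and set h₂ = (h₁∘g)·(g')² + S(g) on U, where S(g) = g'''/g' − (3/2)·(g''/g')². Suppose σ, τ : U → ℂ are smooth with e^σ = G'∘f₂ and e^τ = g' (branches of the logarithms). Define ω₁ = (∂²f₁/∂f₁)·∂μ₁ + 2μ₁·h₁ on U' and ω₂ = (∂²f₂/∂f₂)·∂μ₂ + 2μ₂·h₂ on U, and put A = −(σ+τ)·(∂²f₂/∂f₂) + σ·(g''/g') and B = 2μ₂·(g''/g') − (σ+τ)·(∂̄∂f₂/∂f₂). Then on U one has the descent identity ω₂ − (ω₁∘g)·g'·conj(g') = ∂B − ∂̄A; i.e., with the convention d(A dz + B dz̄) = (∂B − ∂̄A) dz∧dz̄, the difference of the Polyakov 2-forms on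 the overlap is the exterior derivative of the 1-form θ = 2μ₂(g''/g') dz̄ − (σ+τ)·d(log ∂f₂) + σ·dτ. -/

import Mathlib

/-!
Follow the Polyakov density along `F = f₁ ∘ g = G ∘ f₂`. Precomposition with `g` changes it by the
Schwarzian of `g` and by terms in `a = g''/g' = ∂τ`. Postcomposition with `G` leaves the Beltrami
coefficient `μ` unchanged and adds `∂σ · ∂μ`, because `∂²F/∂F = ∂²f₂/∂f₂ + ∂σ`. On the other side,
`d log ∂f₂` is closed, so the undifferentiated `σ + τ` drops out of `dθ`. What is left is matched
by `∂̄τ = 0`, `∂̄σ = μ ∂σ` and `∂̄∂f₂ / ∂f₂ = ∂μ + μ ∂²f₂/∂f₂`.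
-/

open Complex MeasureTheory

/-- The Wirtinger derivative ∂u = (u_x − i·u_y)/2 of a function `u : ℂ → ℂ`. -/
noncomputable def wd (u : ℂ → ℂ) : ℂ → ℂ :=
  fun z => (fderiv ℝ u z 1 - Complex.I * fderiv ℝ u z Complex.I) / 2

/-- The conjugate Wirtinger derivative ∂̄u = (u_x + i·u_y)/2. -/
noncomputable def wdbar (u : ℂ → ℂ) : ℂ → ℂ :=
  fun z => (fderiv ℝ u z 1 + Complex.I * fderiv ℝ u z Complex.I) / 2

/-- The Schwarzian derivative {f,z} = ∂³f/∂f − (3/2)·(∂²f/∂f)² of a smooth map. -/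
noncomputable def schwarz (f : ℂ → ℂ) : ℂ → ℂ :=
  fun z => wd (wd (wd f)) z / wd f z - (3/2) * (wd (wd f) z / wd f z)^2

/-- The Schwarzian derivative S(g) = g'''/g' − (3/2)·(g''/g')² of a holomorphic map. -/
noncomputable def schwarzD (g : ℂ → ℂ) : ℂ → ℂ :=
  fun z => deriv (deriv (deriv g)) z / deriv g z - (3/2) * (deriv (deriv g) z / deriv g z)^2

/-- The operator ∂̄_μ^{(k)} u = ∂̄u − μ·∂u − k·(∂μ)·u. -/
noncomputable def dbarMu (μ : ℂ → ℂ) (k : ℤ) (u : ℂ → ℂ) : ℂ → ℂ :=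
  fun z => wdbar u z - μ z * wd u z - (k : ℂ) * wd μ z * u z

/-- The third-order operator D_h u = ∂³u + 2h·∂u + (∂h)·u. -/
noncomputable def Dop (h u : ℂ → ℂ) : ℂ → ℂ :=
  fun z => wd (wd (wd u)) z + 2 * h z * wd u z + wd h z * u z

/-- The Lie derivative on weight-2 quantities: L_v q = v·∂q + 2·(∂v)·q. -/
noncomputable def lieD (v q : ℂ → ℂ) : ℂ → ℂ :=
  fun z => v z * wd q z + 2 * wd v z * q z

open scoped ContDiff Topology ComplexConjugate

section WirtingerCalculus

variable {u v F g : ℂ → ℂ} {z : ℂ}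

lemma wd_congr (h : u =ᶠ[𝓝 z] v) : wd u =ᶠ[𝓝 z] wd v := by
  filter_upwards [h.fderiv (𝕜 := ℝ)] with x hx
  simp only [wd, hx]

lemma wdbar_congr (h : u =ᶠ[𝓝 z] v) : wdbar u =ᶠ[𝓝 z] wdbar v := by
  filter_upwards [h.fderiv (𝕜 := ℝ)] with x hx
  simp only [wdbar, hx]

lemma wd_add (hu : DifferentiableAt ℝ u z) (hv : DifferentiableAt ℝ v z) :
    wd (u + v) z = wd u z + wd v z := by
  simp only [wd, fderiv_add hu hv, add_apply]
  ring

lemma wdbar_add (hu : DifferentiableAt ℝ u z) (hv : DifferentiableAt ℝ v z) :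
    wdbar (u + v) z = wdbar u z + wdbar v z := by
  simp only [wdbar, fderiv_add hu hv, add_apply]
  ring

lemma wdbar_neg : wdbar (-u) z = -wdbar u z := by
  simp only [wdbar, fderiv_neg, neg_apply]
  ring

lemma wd_sub (hu : DifferentiableAt ℝ u z) (hv : DifferentiableAt ℝ v z) :
    wd (u - v) z = wd u z - wd v z := by
  simp only [wd, fderiv_sub hu hv, sub_apply]
  ring

lemma wd_const_smul (c : ℂ) (hu : DifferentiableAt ℝ u z) : wd (c • u) z = c * wd u z := by
  simp only [wd, fderiv_const_smul hu, smul_apply, smul_eq_mul]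
  ring

lemma wd_mul (hu : DifferentiableAt ℝ u z) (hv : DifferentiableAt ℝ v z) :
    wd (u * v) z = u z * wd v z + wd u z * v z := by
  simp only [wd, fderiv_mul hu hv, add_apply, smul_apply, smul_eq_mul]
  ring

lemma wdbar_mul (hu : DifferentiableAt ℝ u z) (hv : DifferentiableAt ℝ v z) :
    wdbar (u * v) z = u z * wdbar v z + wdbar u z * v z := by
  simp only [wdbar, fderiv_mul hu hv, add_apply, smul_apply, smul_eq_mul]
  ring

lemma fderiv_real_eq_deriv_mul (hF : DifferentiableAt ℂ F z) (w : ℂ) :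
    fderiv ℝ F z w = deriv F z * w := by
  rw [(hF.hasFDerivAt.restrictScalars ℝ).fderiv]
  simp [mul_comm]

lemma wd_eq_deriv (hF : DifferentiableAt ℂ F z) : wd F z = deriv F z := by
  simp only [wd, fderiv_real_eq_deriv_mul hF]
  linear_combination (-deriv F z / 2) * I_mul_I

lemma wdbar_eq_zero (hF : DifferentiableAt ℂ F z) : wdbar F z = 0 := by
  simp only [wdbar, fderiv_real_eq_deriv_mul hF]
  linear_combination (deriv F z / 2) * I_mul_I

lemma fderiv_eq_wd_mul_add_wdbar_mul_conj (w : ℂ) :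
    fderiv ℝ u z w = wd u z * w + wdbar u z * conj w := by
  have hw : fderiv ℝ u z w = w.re * fderiv ℝ u z 1 + w.im * fderiv ℝ u z I := by
    conv_lhs => rw [show w = w.re • (1 : ℂ) + w.im • I by simp]
    rw [map_add, map_smul, map_smul, real_smul, real_smul]
  rw [hw, wd, wdbar, re_eq_add_conj, im_eq_sub_conj]
  field_simp
  linear_combination (fderiv ℝ u z I * (w - conj w)) * I_mul_I

lemma fderiv_holomorphic_comp (hF : DifferentiableAt ℂ F (u z)) (hu : DifferentiableAt ℝ u z)
    (w : ℂ) : fderiv ℝ (F ∘ u) z w = deriv F (u z) * fderiv ℝ u z w := by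
  rw [fderiv_comp z (hF.restrictScalars ℝ) hu, ContinuousLinearMap.comp_apply,
    fderiv_real_eq_deriv_mul hF]

lemma wd_holomorphic_comp (hF : DifferentiableAt ℂ F (u z)) (hu : DifferentiableAt ℝ u z) :
    wd (F ∘ u) z = deriv F (u z) * wd u z := by
  simp only [wd, fderiv_holomorphic_comp hF hu]
  ring

lemma wdbar_holomorphic_comp (hF : DifferentiableAt ℂ F (u z)) (hu : DifferentiableAt ℝ u z) :
    wdbar (F ∘ u) z = deriv F (u z) * wdbar u z := by
  simp only [wdbar, fderiv_holomorphic_comp hF hu]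
  ring

lemma fderiv_comp_holomorphic (hu : DifferentiableAt ℝ u (g z)) (hg : DifferentiableAt ℂ g z)
    (w : ℂ) : fderiv ℝ (u ∘ g) z w
      = wd u (g z) * deriv g z * w + wdbar u (g z) * conj (deriv g z) * conj w := by
  rw [fderiv_comp z hu (hg.restrictScalars ℝ), ContinuousLinearMap.comp_apply,
    fderiv_real_eq_deriv_mul hg, fderiv_eq_wd_mul_add_wdbar_mul_conj, map_mul]
  ring

lemma wd_comp_holomorphic (hu : DifferentiableAt ℝ u (g z)) (hg : DifferentiableAt ℂ g z) :
    wd (u ∘ g) z = wd u (g z) * deriv g z := by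
  rw [wd, fderiv_comp_holomorphic hu hg, fderiv_comp_holomorphic hu hg, map_one, conj_I]
  linear_combination
    (wdbar u (g z) * conj (deriv g z) - wd u (g z) * deriv g z) / 2 * I_mul_I

lemma wdbar_comp_holomorphic (hu : DifferentiableAt ℝ u (g z)) (hg : DifferentiableAt ℂ g z) :
    wdbar (u ∘ g) z = wdbar u (g z) * conj (deriv g z) := by
  rw [wdbar, fderiv_comp_holomorphic hu hg, fderiv_comp_holomorphic hu hg, map_one, conj_I]
  linear_combination
    (wd u (g z) * deriv g z - wdbar u (g z) * conj (deriv g z)) / 2 * I_mul_I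

lemma eventually_differentiableAt_of_contDiffAt (hu : ContDiffAt ℝ 1 u z) :
    ∀ᶠ x in 𝓝 z, DifferentiableAt ℝ u x :=
  (hu.eventually (by simp)).mono fun _ hx => hx.differentiableAt one_ne_zero

lemma wd_holomorphic_comp_eventuallyEq (hF : AnalyticAt ℂ F (u z)) (hu : ContDiffAt ℝ 1 u z) :
    wd (F ∘ u) =ᶠ[𝓝 z] (deriv F ∘ u) * wd u := by
  filter_upwards [hu.continuousAt.eventually hF.eventually_analyticAt,
    eventually_differentiableAt_of_contDiffAt hu] with x hFx hux
  exact wd_holomorphic_comp hFx.differentiableAt hux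

lemma wd_comp_holomorphic_eventuallyEq (hu : ContDiffAt ℝ 1 u (g z)) (hg : AnalyticAt ℂ g z) :
    wd (u ∘ g) =ᶠ[𝓝 z] (wd u ∘ g) * deriv g := by
  filter_upwards [hg.continuousAt.eventually (eventually_differentiableAt_of_contDiffAt hu),
    hg.eventually_analyticAt] with x hux hgx
  exact wd_comp_holomorphic hux hgx.differentiableAt

lemma wd_conj_comp_holomorphic (hg : DifferentiableAt ℂ g z) : wd (conj ∘ g) z = 0 := by
  have hconj : wd conj (g z) = 0 := by
    have h : fderiv ℝ (conj : ℂ → ℂ) (g z) = conjCLE := conjCLE.fderiv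
    simp [wd, h]
  have hd : DifferentiableAt ℝ conj (g z) := conjCLE.differentiableAt
  rw [wd_comp_holomorphic hd hg, hconj, zero_mul]

lemma differentiableAt_real_div (hu : DifferentiableAt ℝ u z) (hv : DifferentiableAt ℝ v z)
    (h0 : v z ≠ 0) : DifferentiableAt ℝ (u / v) z := by
  rw [div_eq_mul_inv]
  exact hu.mul (hv.inv h0)

lemma wd_div (hu : DifferentiableAt ℝ u z) (hv : DifferentiableAt ℝ v z) (h0 : v z ≠ 0) :
    wd (u / v) z = (wd u z * v z - u z * wd v z) / v z ^ 2 := by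
  have hinv : wd v⁻¹ z = -(v z ^ 2)⁻¹ * wd v z := by
    rw [← deriv_inv, ← wd_holomorphic_comp (differentiableAt_inv h0) hv]
    rfl
  rw [div_eq_mul_inv, wd_mul hu (hv.inv h0), hinv, Pi.inv_apply]
  field_simp
  ring

lemma wdbar_div (hu : DifferentiableAt ℝ u z) (hv : DifferentiableAt ℝ v z) (h0 : v z ≠ 0) :
    wdbar (u / v) z = (wdbar u z * v z - u z * wdbar v z) / v z ^ 2 := by
  have hinv : wdbar v⁻¹ z = -(v z ^ 2)⁻¹ * wdbar v z := by
    rw [← deriv_inv, ← wdbar_holomorphic_comp (differentiableAt_inv h0) hv]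
    rfl
  rw [div_eq_mul_inv, wdbar_mul hu (hv.inv h0), hinv, Pi.inv_apply]
  field_simp
  ring

lemma contDiffAt_wd {m n : ℕ∞ω} (hu : ContDiffAt ℝ n u z) (hmn : m + 1 ≤ n) :
    ContDiffAt ℝ m (wd u) z := by
  have h := hu.fderiv_right hmn
  exact ((h.clm_apply contDiffAt_const).sub
    (contDiffAt_const.mul (h.clm_apply contDiffAt_const))).div_const 2

lemma contDiffAt_wdbar {m n : ℕ∞ω} (hu : ContDiffAt ℝ n u z) (hmn : m + 1 ≤ n) :
    ContDiffAt ℝ m (wdbar u) z := by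
  have h := hu.fderiv_right hmn
  exact ((h.clm_apply contDiffAt_const).add
    (contDiffAt_const.mul (h.clm_apply contDiffAt_const))).div_const 2

lemma differentiableAt_wd (hu : ContDiffAt ℝ 2 u z) : DifferentiableAt ℝ (wd u) z :=
  (contDiffAt_wd hu one_add_one_eq_two.le).differentiableAt one_ne_zero

lemma differentiableAt_wdbar (hu : ContDiffAt ℝ 2 u z) : DifferentiableAt ℝ (wdbar u) z :=
  (contDiffAt_wdbar hu one_add_one_eq_two.le).differentiableAt one_ne_zero

lemma fderiv_fderiv_apply (hu : DifferentiableAt ℝ (fderiv ℝ u) z) (a b : ℂ) :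
    fderiv ℝ (fun x => fderiv ℝ u x a) z b = fderiv ℝ (fderiv ℝ u) z b a := by
  rw [fderiv_clm_apply hu (differentiableAt_const a)]
  simp

lemma fderiv_wd (hu : DifferentiableAt ℝ (fderiv ℝ u) z) (w : ℂ) :
    fderiv ℝ (wd u) z w
      = (fderiv ℝ (fderiv ℝ u) z w 1 - I * fderiv ℝ (fderiv ℝ u) z w I) / 2 := by
  have h (a : ℂ) : DifferentiableAt ℝ (fun x => fderiv ℝ u x a) z :=
    hu.clm_apply (differentiableAt_const a)
  simp only [← fderiv_fderiv_apply hu]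
  unfold wd
  simp only [div_eq_mul_inv]
  rw [fderiv_mul_const ((h 1).fun_sub ((h I).const_mul I)),
    fderiv_fun_sub (h 1) ((h I).const_mul I), fderiv_const_mul (h I)]
  simp [mul_comm, mul_sub]

lemma fderiv_wdbar (hu : DifferentiableAt ℝ (fderiv ℝ u) z) (w : ℂ) :
    fderiv ℝ (wdbar u) z w
      = (fderiv ℝ (fderiv ℝ u) z w 1 + I * fderiv ℝ (fderiv ℝ u) z w I) / 2 := by
  have h (a : ℂ) : DifferentiableAt ℝ (fun x => fderiv ℝ u x a) z :=
    hu.clm_apply (differentiableAt_const a)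
  simp only [← fderiv_fderiv_apply hu]
  unfold wdbar
  simp only [div_eq_mul_inv]
  rw [fderiv_mul_const ((h 1).fun_add ((h I).const_mul I)),
    fderiv_fun_add (h 1) ((h I).const_mul I), fderiv_const_mul (h I)]
  simp [mul_comm, mul_add]

lemma wd_wdbar_comm (hu : ContDiffAt ℝ 2 u z) : wd (wdbar u) z = wdbar (wd u) z := by
  have hd : DifferentiableAt ℝ (fderiv ℝ u) z :=
    (hu.fderiv_right one_add_one_eq_two.le).differentiableAt one_ne_zero
  have hsymm : fderiv ℝ (fderiv ℝ u) z 1 I = fderiv ℝ (fderiv ℝ u) z I 1 :=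
    hu.isSymmSndFDerivAt (by simp) 1 I
  rw [wd, wdbar, fderiv_wd hd, fderiv_wd hd, fderiv_wdbar hd, fderiv_wdbar hd, hsymm]
  ring

/-- For `η = n dz + m dz̄` this is `d(s η) = ds ∧ η`, the hypothesis `hmn` being `dη = 0`. -/
lemma wd_mul_sub_wdbar_mul_of_wd_eq_wdbar {s m n : ℂ → ℂ} (hs : DifferentiableAt ℝ s z)
    (hm : DifferentiableAt ℝ m z) (hn : DifferentiableAt ℝ n z) (hmn : wd m z = wdbar n z) :
    wd (s * m) z - wdbar (s * n) z = wd s z * m z - wdbar s z * n z := by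
  rw [wd_mul hs hm, wdbar_mul hs hn, hmn]
  ring

end WirtingerCalculus

section LogarithmicDerivative

/-- The `dz`-component `∂u / u` of `d log u`. -/
noncomputable def logWd (u : ℂ → ℂ) : ℂ → ℂ := wd u / u

/-- The `dz̄`-component `∂̄u / u` of `d log u`. -/
noncomputable def logWdbar (u : ℂ → ℂ) : ℂ → ℂ := wdbar u / u

variable {u v F g σ : ℂ → ℂ} {z : ℂ}

lemma logWd_congr (h : u =ᶠ[𝓝 z] v) : logWd u =ᶠ[𝓝 z] logWd v :=
  (wd_congr h).div h

lemma logWdbar_congr (h : u =ᶠ[𝓝 z] v) : logWdbar u =ᶠ[𝓝 z] logWdbar v :=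
  (wdbar_congr h).div h

lemma logWd_mul (hu : DifferentiableAt ℝ u z) (hv : DifferentiableAt ℝ v z) (hu0 : u z ≠ 0)
    (hv0 : v z ≠ 0) : logWd (u * v) z = logWd u z + logWd v z := by
  simp only [logWd, Pi.div_apply, Pi.mul_apply, wd_mul hu hv]
  field_simp
  ring

lemma logWdbar_mul (hu : DifferentiableAt ℝ u z) (hv : DifferentiableAt ℝ v z) (hu0 : u z ≠ 0)
    (hv0 : v z ≠ 0) : logWdbar (u * v) z = logWdbar u z + logWdbar v z := by
  simp only [logWdbar, Pi.div_apply, Pi.mul_apply, wdbar_mul hu hv]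
  field_simp
  ring

lemma logWd_eq_logDeriv (hF : DifferentiableAt ℂ F z) : logWd F z = logDeriv F z := by
  rw [logWd, Pi.div_apply, wd_eq_deriv hF, logDeriv_apply]

lemma logWdbar_eq_zero (hF : DifferentiableAt ℂ F z) : logWdbar F z = 0 := by
  rw [logWdbar, Pi.div_apply, wdbar_eq_zero hF, zero_div]

lemma logWd_holomorphic_comp (hF : DifferentiableAt ℂ F (u z)) (hu : DifferentiableAt ℝ u z) :
    logWd (F ∘ u) z = logDeriv F (u z) * wd u z := by
  rw [logWd, Pi.div_apply, wd_holomorphic_comp hF hu, logDeriv_apply, Function.comp_apply]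
  ring

lemma logWdbar_holomorphic_comp (hF : DifferentiableAt ℂ F (u z)) (hu : DifferentiableAt ℝ u z) :
    logWdbar (F ∘ u) z = logDeriv F (u z) * wdbar u z := by
  rw [logWdbar, Pi.div_apply, wdbar_holomorphic_comp hF hu, logDeriv_apply, Function.comp_apply]
  ring

lemma logWd_comp_holomorphic (hu : DifferentiableAt ℝ u (g z)) (hg : DifferentiableAt ℂ g z) :
    logWd (u ∘ g) z = logWd u (g z) * deriv g z := by
  simp only [logWd, Pi.div_apply, wd_comp_holomorphic hu hg, Function.comp_apply]
  ring

lemma wd_eq_logWd_of_exp (hσ : DifferentiableAt ℝ σ z) (h : exp ∘ σ =ᶠ[𝓝 z] u) :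
    wd σ z = logWd u z := by
  rw [← (logWd_congr h).eq_of_nhds, logWd_holomorphic_comp differentiableAt_exp hσ,
    logDeriv_exp, Pi.one_apply, one_mul]

lemma wdbar_eq_logWdbar_of_exp (hσ : DifferentiableAt ℝ σ z) (h : exp ∘ σ =ᶠ[𝓝 z] u) :
    wdbar σ z = logWdbar u z := by
  rw [← (logWdbar_congr h).eq_of_nhds, logWdbar_holomorphic_comp differentiableAt_exp hσ,
    logDeriv_exp, Pi.one_apply, one_mul]

lemma differentiableAt_logWd (hu : ContDiffAt ℝ 2 u z) (hu0 : u z ≠ 0) :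
    DifferentiableAt ℝ (logWd u) z :=
  differentiableAt_real_div (differentiableAt_wd hu) (hu.differentiableAt two_ne_zero) hu0

lemma differentiableAt_logWdbar (hu : ContDiffAt ℝ 2 u z) (hu0 : u z ≠ 0) :
    DifferentiableAt ℝ (logWdbar u) z :=
  differentiableAt_real_div (differentiableAt_wdbar hu) (hu.differentiableAt two_ne_zero) hu0

lemma wd_logWdbar_eq_wdbar_logWd (hu : ContDiffAt ℝ 2 u z) (hu0 : u z ≠ 0) :
    wd (logWdbar u) z = wdbar (logWd u) z := by
  have hd : DifferentiableAt ℝ u z := hu.differentiableAt two_ne_zero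
  rw [logWdbar, logWd, wd_div (differentiableAt_wdbar hu) hd hu0,
    wdbar_div (differentiableAt_wd hu) hd hu0, wd_wdbar_comm hu]
  ring

end LogarithmicDerivative

section Polyakov

/-- The Beltrami coefficient `∂̄f / ∂f` of a deformation map `f`. -/
noncomputable def beltrami (f : ℂ → ℂ) : ℂ → ℂ := wdbar f / wd f

/-- The coefficient of `dz ∧ dz̄` in the Polyakov `2`-form of the deformation map `f` and the
projective connection `h`. -/
noncomputable def polyakovDensity (f h : ℂ → ℂ) : ℂ → ℂ :=
  fun z => logWd (wd f) z * wd (beltrami f) z + 2 * beltrami f z * h z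

variable {f f' g G h h' : ℂ → ℂ} {z : ℂ}

lemma beltrami_congr (hf : f =ᶠ[𝓝 z] f') : beltrami f =ᶠ[𝓝 z] beltrami f' :=
  (wdbar_congr hf).div (wd_congr hf)

lemma differentiableAt_beltrami (hf : ContDiffAt ℝ 2 f z) (hf0 : wd f z ≠ 0) :
    DifferentiableAt ℝ (beltrami f) z :=
  differentiableAt_real_div (differentiableAt_wdbar hf) (differentiableAt_wd hf) hf0

lemma logWdbar_holomorphic_comp_eq_beltrami_mul (hG : DifferentiableAt ℂ G (f z))
    (hf : DifferentiableAt ℝ f z) (hf0 : wd f z ≠ 0) :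
    logWdbar (G ∘ f) z = beltrami f z * logWd (G ∘ f) z := by
  rw [logWdbar_holomorphic_comp hG hf, logWd_holomorphic_comp hG hf, beltrami, Pi.div_apply]
  field_simp

lemma logWdbar_wd (hf : ContDiffAt ℝ 2 f z) (hf0 : wd f z ≠ 0) :
    logWdbar (wd f) z = wd (beltrami f) z + beltrami f z * logWd (wd f) z := by
  rw [logWdbar, Pi.div_apply, ← wd_wdbar_comm hf, beltrami,
    wd_div (differentiableAt_wdbar hf) (differentiableAt_wd hf) hf0, logWd, Pi.div_apply,
    Pi.div_apply]
  field_simp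
  ring

lemma logWd_wd_comp_holomorphic (hf : ContDiffAt ℝ 2 f (g z)) (hf0 : wd f (g z) ≠ 0)
    (hg : AnalyticAt ℂ g z) (hg0 : deriv g z ≠ 0) :
    logWd (wd (f ∘ g)) z = logWd (wd f) (g z) * deriv g z + logDeriv (deriv g) z := by
  have hp : DifferentiableAt ℝ (wd f) (g z) := differentiableAt_wd hf
  rw [(logWd_congr (wd_comp_holomorphic_eventuallyEq (hf.of_le one_le_two) hg)).eq_of_nhds,
    logWd_mul (hp.comp z (hg.differentiableAt.restrictScalars ℝ))
      (hg.deriv.differentiableAt.restrictScalars ℝ) hf0 hg0,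
    logWd_comp_holomorphic hp hg.differentiableAt, logWd_eq_logDeriv hg.deriv.differentiableAt]

lemma logWd_wd_holomorphic_comp (hG : AnalyticAt ℂ G (f z)) (hG0 : deriv G (f z) ≠ 0)
    (hf : ContDiffAt ℝ 2 f z) (hf0 : wd f z ≠ 0) :
    logWd (wd (G ∘ f)) z = logWd (deriv G ∘ f) z + logWd (wd f) z := by
  rw [(logWd_congr (wd_holomorphic_comp_eventuallyEq hG (hf.of_le one_le_two))).eq_of_nhds]
  exact logWd_mul ((hG.deriv.differentiableAt.restrictScalars ℝ).comp z
    (hf.differentiableAt two_ne_zero)) (differentiableAt_wd hf) hG0 hf0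

lemma logWdbar_wd_holomorphic_comp (hG : AnalyticAt ℂ G (f z)) (hG0 : deriv G (f z) ≠ 0)
    (hf : ContDiffAt ℝ 2 f z) (hf0 : wd f z ≠ 0) :
    logWdbar (wd (G ∘ f)) z = logWdbar (deriv G ∘ f) z + logWdbar (wd f) z := by
  rw [(logWdbar_congr (wd_holomorphic_comp_eventuallyEq hG (hf.of_le one_le_two))).eq_of_nhds]
  exact logWdbar_mul ((hG.deriv.differentiableAt.restrictScalars ℝ).comp z
    (hf.differentiableAt two_ne_zero)) (differentiableAt_wd hf) hG0 hf0

lemma beltrami_comp_holomorphic (hf : DifferentiableAt ℝ f (g z)) (hg : DifferentiableAt ℂ g z) :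
    beltrami (f ∘ g) z = beltrami f (g z) * (conj (deriv g z) / deriv g z) := by
  simp only [beltrami, Pi.div_apply]
  rw [wdbar_comp_holomorphic hf hg, wd_comp_holomorphic hf hg, mul_div_mul_comm]

lemma beltrami_holomorphic_comp (hG : DifferentiableAt ℂ G (f z)) (hG0 : deriv G (f z) ≠ 0)
    (hf : DifferentiableAt ℝ f z) : beltrami (G ∘ f) z = beltrami f z := by
  simp only [beltrami, Pi.div_apply]
  rw [wdbar_holomorphic_comp hG hf, wd_holomorphic_comp hG hf, mul_div_mul_left _ _ hG0]

lemma beltrami_holomorphic_comp_eventuallyEq (hG : AnalyticAt ℂ G (f z))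
    (hG0 : deriv G (f z) ≠ 0) (hf : ContDiffAt ℝ 1 f z) :
    beltrami (G ∘ f) =ᶠ[𝓝 z] beltrami f := by
  filter_upwards [hf.continuousAt.eventually hG.eventually_analyticAt,
    hf.continuousAt.eventually (hG.deriv.continuousAt.eventually_ne hG0),
    eventually_differentiableAt_of_contDiffAt hf] with x hGx hGx0 hfx
  exact beltrami_holomorphic_comp hGx.differentiableAt hGx0 hfx

lemma wd_beltrami_comp_holomorphic (hf : ContDiffAt ℝ 2 f (g z)) (hf0 : wd f (g z) ≠ 0)
    (hg : AnalyticAt ℂ g z) (hg0 : deriv g z ≠ 0) :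
    wd (beltrami (f ∘ g) * deriv g) z = wd (beltrami f) (g z) * deriv g z * conj (deriv g z) := by
  have hμ : beltrami (f ∘ g) * deriv g =ᶠ[𝓝 z] (beltrami f ∘ g) * (conj ∘ deriv g) := by
    have hfev := eventually_differentiableAt_of_contDiffAt (hf.of_le one_le_two)
    filter_upwards [hg.continuousAt.eventually hfev,
      hg.eventually_analyticAt, hg.deriv.continuousAt.eventually_ne hg0] with x hfx hgx hgx0
    simp only [Pi.mul_apply, Function.comp_apply,
      beltrami_comp_holomorphic hfx hgx.differentiableAt]
    field_simp
  have hdμ : DifferentiableAt ℝ (beltrami f) (g z) := differentiableAt_beltrami hf hf0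
  have hdg : DifferentiableAt ℂ (deriv g) z := hg.deriv.differentiableAt
  have hdconj : DifferentiableAt ℝ (conj ∘ deriv g) z :=
    conjCLE.differentiableAt.comp z (hdg.restrictScalars ℝ)
  rw [(wd_congr hμ).eq_of_nhds,
    wd_mul (hdμ.comp z (hg.differentiableAt.restrictScalars ℝ)) hdconj,
    wd_conj_comp_holomorphic hdg, wd_comp_holomorphic hdμ hg.differentiableAt]
  simp

lemma schwarzD_eq_deriv_logDeriv_sub (hg : AnalyticAt ℂ g z) (hg0 : deriv g z ≠ 0) :
    schwarzD g z = deriv (logDeriv (deriv g)) z - logDeriv (deriv g) z ^ 2 / 2 := by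
  rw [schwarzD, logDeriv, deriv_div hg.deriv.deriv.differentiableAt hg.deriv.differentiableAt hg0,
    Pi.div_apply]
  field_simp
  ring

lemma wd_comp_holomorphic_ne_zero (hf : DifferentiableAt ℝ f (g z)) (hf0 : wd f (g z) ≠ 0)
    (hg : DifferentiableAt ℂ g z) (hg0 : deriv g z ≠ 0) : wd (f ∘ g) z ≠ 0 := by
  rw [wd_comp_holomorphic hf hg]
  exact mul_ne_zero hf0 hg0

lemma polyakovDensity_congr (hf : f =ᶠ[𝓝 z] f') :
    polyakovDensity f h z = polyakovDensity f' h z := by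
  simp only [polyakovDensity, (logWd_congr (wd_congr hf)).eq_of_nhds,
    (wd_congr (beltrami_congr hf)).eq_of_nhds, (beltrami_congr hf).eq_of_nhds]

lemma polyakovDensity_comp_holomorphic_sub (hf : ContDiffAt ℝ 2 f (g z)) (hf0 : wd f (g z) ≠ 0)
    (hg : AnalyticAt ℂ g z) (hg0 : deriv g z ≠ 0)
    (hh : h' z = h (g z) * deriv g z ^ 2 + schwarzD g z) :
    polyakovDensity (f ∘ g) h' z - polyakovDensity f h (g z) * deriv g z * conj (deriv g z)
      = 2 * wd (beltrami (f ∘ g) * logDeriv (deriv g)) z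
        - logDeriv (deriv g) z * logWdbar (wd (f ∘ g)) z := by
  have hdf : DifferentiableAt ℝ f (g z) := hf.differentiableAt two_ne_zero
  have hfg : ContDiffAt ℝ 2 (f ∘ g) z := hf.comp z (hg.contDiffAt.restrict_scalars ℝ)
  have hfg0 : wd (f ∘ g) z ≠ 0 := wd_comp_holomorphic_ne_zero hdf hf0 hg.differentiableAt hg0
  have hdμ : DifferentiableAt ℝ (beltrami (f ∘ g)) z := differentiableAt_beltrami hfg hfg0
  have hg₁ : DifferentiableAt ℂ (deriv g) z := hg.deriv.differentiableAt
  have ha : DifferentiableAt ℂ (logDeriv (deriv g)) z := hg.deriv.deriv.differentiableAt.div hg₁ hg0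
  have hg₂ : deriv (deriv g) z = logDeriv (deriv g) z * deriv g z := by
    rw [logDeriv_apply, div_mul_cancel₀ _ hg0]
  have hN := logWd_wd_comp_holomorphic hf hf0 hg hg0
  have hμ : beltrami (f ∘ g) z * deriv g z = beltrami f (g z) * conj (deriv g z) := by
    rw [beltrami_comp_holomorphic hdf hg.differentiableAt]
    field_simp
  have hdμ' : wd (beltrami f) (g z) * conj (deriv g z)
      = wd (beltrami (f ∘ g)) z + beltrami (f ∘ g) z * logDeriv (deriv g) z := by
    have h := wd_beltrami_comp_holomorphic hf hf0 hg hg0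
    rw [wd_mul hdμ (hg₁.restrictScalars ℝ), wd_eq_deriv hg₁, hg₂] at h
    refine mul_right_cancel₀ hg0 ?_
    linear_combination -h
  rw [logWdbar_wd hfg hfg0, wd_mul hdμ (ha.restrictScalars ℝ), wd_eq_deriv ha]
  simp only [polyakovDensity]
  rw [hN, hh, schwarzD_eq_deriv_logDeriv_sub hg hg0]
  linear_combination -(logWd (wd f) (g z) * deriv g z) * hdμ'
    + 2 * h (g z) * deriv g z * hμ

lemma polyakovDensity_holomorphic_comp (hG : AnalyticAt ℂ G (f z)) (hG0 : deriv G (f z) ≠ 0)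
    (hf : ContDiffAt ℝ 2 f z) (hf0 : wd f z ≠ 0) :
    polyakovDensity (G ∘ f) h z
      = polyakovDensity f h z + logWd (deriv G ∘ f) z * wd (beltrami f) z := by
  have hμ := beltrami_holomorphic_comp_eventuallyEq hG hG0 (hf.of_le one_le_two)
  simp only [polyakovDensity, hμ.eq_of_nhds, (wd_congr hμ).eq_of_nhds,
    logWd_wd_holomorphic_comp hG hG0 hf hf0]
  ring

end Polyakov

section Descent

/-- The `dz`-component of the `1`-form `θ = 2μ(g''/g') dz̄ - (σ+τ) d(log ∂f) + σ dτ`, where `μ` is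
the Beltrami coefficient of `f` and `∂τ` is written as `g''/g'`. -/
noncomputable def descentDz (f g σ τ : ℂ → ℂ) : ℂ → ℂ :=
  -(σ + τ) * logWd (wd f) + σ * logDeriv (deriv g)

/-- The `dz̄`-component of the `1`-form `θ = 2μ(g''/g') dz̄ - (σ+τ) d(log ∂f) + σ dτ`, where `μ` is
the Beltrami coefficient of `f`. -/
noncomputable def descentDzbar (f g σ τ : ℂ → ℂ) : ℂ → ℂ :=
  (2 : ℂ) • beltrami f * logDeriv (deriv g) - (σ + τ) * logWdbar (wd f)

variable {f g F σ τ : ℂ → ℂ} {z : ℂ}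

lemma wd_descentDzbar_sub_wdbar_descentDz (hf : ContDiffAt ℝ 3 f z) (hf0 : wd f z ≠ 0)
    (hg : AnalyticAt ℂ g z) (hg0 : deriv g z ≠ 0) (hσ : DifferentiableAt ℝ σ z)
    (hτ : DifferentiableAt ℝ τ z) :
    wd (descentDzbar f g σ τ) z - wdbar (descentDz f g σ τ) z
      = 2 * wd (beltrami f * logDeriv (deriv g)) z
        - (wd (σ + τ) z * logWdbar (wd f) z - wdbar (σ + τ) z * logWd (wd f) z)
        - wdbar σ z * logDeriv (deriv g) z := by
  have hp : ContDiffAt ℝ 2 (wd f) z := contDiffAt_wd hf two_add_one_eq_three.le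
  have hm : DifferentiableAt ℝ (logWdbar (wd f)) z := differentiableAt_logWdbar hp hf0
  have hn : DifferentiableAt ℝ (logWd (wd f)) z := differentiableAt_logWd hp hf0
  have ha : DifferentiableAt ℂ (logDeriv (deriv g)) z :=
    hg.deriv.deriv.differentiableAt.div hg.deriv.differentiableAt hg0
  have haR : DifferentiableAt ℝ (logDeriv (deriv g)) z := ha.restrictScalars ℝ
  have hμa : DifferentiableAt ℝ (beltrami f * logDeriv (deriv g)) z :=
    (differentiableAt_beltrami (hf.of_le (by norm_num)) hf0).mul haR
  have hs : DifferentiableAt ℝ (σ + τ) z := hσ.add hτ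
  rw [← wd_mul_sub_wdbar_mul_of_wd_eq_wdbar hs hm hn (wd_logWdbar_eq_wdbar_logWd hp hf0),
    descentDzbar, descentDz, smul_mul_assoc, neg_mul, wd_sub (hμa.const_smul (2 : ℂ)) (hs.mul hm),
    wd_const_smul 2 hμa, wdbar_add (hs.mul hn).neg (hσ.mul haR), wdbar_neg, wdbar_mul hσ haR,
    wdbar_eq_zero ha]
  ring

lemma wd_descentDzbar_sub_wdbar_descentDz_of_exp (hf : ContDiffAt ℝ 3 f z) (hf0 : wd f z ≠ 0)
    (hF : DifferentiableAt ℂ F (f z)) (hg : AnalyticAt ℂ g z)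
    (hσd : DifferentiableAt ℝ σ z) (hτd : DifferentiableAt ℝ τ z)
    (hσ : exp ∘ σ =ᶠ[𝓝 z] F ∘ f) (hτ : exp ∘ τ =ᶠ[𝓝 z] deriv g) :
    wd (descentDzbar f g σ τ) z - wdbar (descentDz f g σ τ) z
      = 2 * wd (beltrami f * logDeriv (deriv g)) z
        - logDeriv (deriv g) z * (logWdbar (F ∘ f) z + logWdbar (wd f) z)
        - logWd (F ∘ f) z * wd (beltrami f) z := by
  have hf₂ : ContDiffAt ℝ 2 f z := hf.of_le (by norm_num)
  have hg0 : deriv g z ≠ 0 := hτ.eq_of_nhds ▸ exp_ne_zero (τ z)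
  have hg₁ : DifferentiableAt ℂ (deriv g) z := hg.deriv.differentiableAt
  rw [wd_descentDzbar_sub_wdbar_descentDz hf hf0 hg hg0 hσd hτd, wd_add hσd hτd,
    wdbar_add hσd hτd, wd_eq_logWd_of_exp hσd hσ, wdbar_eq_logWdbar_of_exp hσd hσ,
    wd_eq_logWd_of_exp hτd hτ, wdbar_eq_logWdbar_of_exp hτd hτ, logWd_eq_logDeriv hg₁,
    logWdbar_eq_zero hg₁, logWdbar_wd hf₂ hf0,
    logWdbar_holomorphic_comp_eq_beltrami_mul hF (hf₂.differentiableAt two_ne_zero) hf0]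
  ring

end Descent

theorem stmt12_general {U U' V : Set ℂ} (hU : IsOpen U) (hU' : IsOpen U') (hV : IsOpen V)
    {g : ℂ → ℂ} (hg : DifferentiableOn ℂ g U) (hgU : Set.MapsTo g U U')
    {G : ℂ → ℂ} (hG : DifferentiableOn ℂ G V)
    {f₁ f₂ : ℂ → ℂ} (hf₁ : ContDiffOn ℝ 2 f₁ U') (hf₂ : ContDiffOn ℝ 3 f₂ U)
    (hf₂' : ∀ z ∈ U, wd f₂ z ≠ 0) (hf₂V : Set.MapsTo f₂ U V)
    (hint : Set.EqOn (f₁ ∘ g) (G ∘ f₂) U)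
    {h₁ h₂ : ℂ → ℂ} (hh₂ : ∀ z ∈ U, h₂ z = h₁ (g z) * deriv g z ^ 2 + schwarzD g z)
    {σ τ : ℂ → ℂ} (hσd : DifferentiableOn ℝ σ U) (hτd : DifferentiableOn ℝ τ U)
    (hσ : Set.EqOn (exp ∘ σ) (deriv G ∘ f₂) U) (hτ : Set.EqOn (exp ∘ τ) (deriv g) U) :
    ∀ z ∈ U,
      polyakovDensity f₂ h₂ z - polyakovDensity f₁ h₁ (g z) * deriv g z * conj (deriv g z)
        = wd (descentDzbar f₂ g σ τ) z - wdbar (descentDz f₂ g σ τ) z := by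
  intro z hz
  have hzU : U ∈ 𝓝 z := hU.mem_nhds hz
  have hgz : AnalyticAt ℂ g z := hg.analyticAt hzU
  have hGz : AnalyticAt ℂ G (f₂ z) := hG.analyticAt (hV.mem_nhds (hf₂V hz))
  have hf₁z : ContDiffAt ℝ 2 f₁ (g z) := hf₁.contDiffAt (hU'.mem_nhds (hgU hz))
  have hf₂z : ContDiffAt ℝ 3 f₂ z := hf₂.contDiffAt hzU
  have hf₂z' : ContDiffAt ℝ 2 f₂ z := hf₂z.of_le (by norm_num)
  have hg0 : deriv g z ≠ 0 := fun h => exp_ne_zero (τ z) ((hτ hz).trans h)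
  have hG0 : deriv G (f₂ z) ≠ 0 := fun h => exp_ne_zero (σ z) ((hσ hz).trans h)
  have hF : f₁ ∘ g =ᶠ[𝓝 z] G ∘ f₂ := hint.eventuallyEq_of_mem hzU
  have hf₁0 : wd f₁ (g z) ≠ 0 := by
    refine left_ne_zero_of_mul (b := deriv g z) ?_
    rw [← wd_comp_holomorphic (hf₁z.differentiableAt two_ne_zero) hgz.differentiableAt,
      (wd_congr hF).eq_of_nhds,
      wd_holomorphic_comp hGz.differentiableAt (hf₂z'.differentiableAt two_ne_zero)]
    exact mul_ne_zero hG0 (hf₂' z hz)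
  have hpre := polyakovDensity_comp_holomorphic_sub hf₁z hf₁0 hgz hg0 (hh₂ z hz)
  have hpost := polyakovDensity_holomorphic_comp (h := h₂) hGz hG0 hf₂z' (hf₂' z hz)
  have hμ : beltrami (f₁ ∘ g) =ᶠ[𝓝 z] beltrami f₂ :=
    (beltrami_congr hF).trans
      (beltrami_holomorphic_comp_eventuallyEq hGz hG0 (hf₂z.of_le (by norm_num)))
  rw [polyakovDensity_congr hF, hpost, (logWdbar_congr (wd_congr hF)).eq_of_nhds,
    logWdbar_wd_holomorphic_comp hGz hG0 hf₂z' (hf₂' z hz),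
    (wd_congr (hμ.mul .rfl)).eq_of_nhds] at hpre
  rw [wd_descentDzbar_sub_wdbar_descentDz_of_exp hf₂z (hf₂' z hz) hGz.deriv.differentiableAt hgz
    (hσd.differentiableAt hzU) (hτd.differentiableAt hzU) (hσ.eventuallyEq_of_mem hzU)
    (hτ.eventuallyEq_of_mem hzU)]
  linear_combination hpre

/-- descent identity for the Polyakov 2-form on the overlap of two
charts: `ω₂ − (ω₁∘g)·g'·conj(g') = ∂B − ∂̄A`, where `θ = A dz + B dz̄` is the
1-form `θ = 2μ₂(g''/g') dz̄ − (σ+τ)·d(log ∂f₂) + σ·dτ`. -/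
theorem stmt12 (U U' V V' : Set ℂ)
    (hU : IsOpen U) (hU' : IsOpen U') (hV : IsOpen V) (hV' : IsOpen V')
    -- g : U → U' biholomorphism
    (g : ℂ → ℂ) (hg : DifferentiableOn ℂ g U) (hgbij : Set.BijOn g U U')
    (hg' : ∀ z ∈ U, deriv g z ≠ 0)
    -- G : V → V' biholomorphism
    (G : ℂ → ℂ) (hG : DifferentiableOn ℂ G V) (hGbij : Set.BijOn G V V')
    (hG' : ∀ w ∈ V, deriv G w ≠ 0)
    -- the deformation maps f₂ : U → V and f₁ : U' → V'
    (f₁ f₂ : ℂ → ℂ)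
    (hf₁ : ContDiffOn ℝ (⊤ : ℕ∞) f₁ U') (hf₁' : ∀ w ∈ U', wd f₁ w ≠ 0)
    (hf₂ : ContDiffOn ℝ (⊤ : ℕ∞) f₂ U) (hf₂' : ∀ z ∈ U, wd f₂ z ≠ 0)
    (hf₂maps : Set.MapsTo f₂ U V)
    -- the intertwining relation f₁∘g = G∘f₂
    (hint : ∀ z ∈ U, f₁ (g z) = G (f₂ z))
    -- the Beltrami coefficients
    (μ₁ μ₂ : ℂ → ℂ)
    (hμ₁ : μ₁ = fun w => wdbar f₁ w / wd f₁ w)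
    (hμ₂ : μ₂ = fun z => wdbar f₂ z / wd f₂ z)
    -- the projective connections
    (h₁ h₂ : ℂ → ℂ) (hh₁ : ContDiffOn ℝ (⊤ : ℕ∞) h₁ U')
    (hh₂ : ∀ z ∈ U, h₂ z = h₁ (g z) * (deriv g z)^2 + schwarzD g z)
    -- branches of the logarithms: e^σ = G'∘f₂ and e^τ = g'
    (σ τ : ℂ → ℂ) (hσs : ContDiffOn ℝ (⊤ : ℕ∞) σ U) (hτs : ContDiffOn ℝ (⊤ : ℕ∞) τ U)
    (hσ : ∀ z ∈ U, Complex.exp (σ z) = deriv G (f₂ z))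
    (hτ : ∀ z ∈ U, Complex.exp (τ z) = deriv g z)
    -- the Polyakov densities
    (ω₁ ω₂ : ℂ → ℂ)
    (hω₁ : ω₁ = fun w => (wd (wd f₁) w / wd f₁ w) * wd μ₁ w + 2 * μ₁ w * h₁ w)
    (hω₂ : ω₂ = fun z => (wd (wd f₂) z / wd f₂ z) * wd μ₂ z + 2 * μ₂ z * h₂ z)
    -- the components of the 1-form θ = A dz + B dz̄
    (A B : ℂ → ℂ)
    (hA : A = fun z => -(σ z + τ z) * (wd (wd f₂) z / wd f₂ z)
                         + σ z * (deriv (deriv g) z / deriv g z))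
    (hB : B = fun z => 2 * μ₂ z * (deriv (deriv g) z / deriv g z)
                         - (σ z + τ z) * (wdbar (wd f₂) z / wd f₂ z)) :
    ∀ z ∈ U,
      ω₂ z - ω₁ (g z) * deriv g z * (starRingEnd ℂ) (deriv g z)
        = wd B z - wdbar A z := by
  subst hμ₁ hμ₂ hω₁ hω₂ hA hB
  exact stmt12_general hU hU' hV hg hgbij.mapsTo hG (hf₁.of_le ENat.LEInfty.out)
    (hf₂.of_le ENat.LEInfty.out) hf₂' hf₂maps hint hh₂ (hσs.differentiableOn (by simp))
    (hτs.differentiableOn (by simp)) hσ hτ
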